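/- arXiv:1102.0264 — 3 statements merged into one kernel-verified Lean document; each statement's English description precedes it below -/
import Mathlib

section
/- Let M be a measurement cover on a finite set of measurements X with finite outcome set O, and let (e_C)_{C∈M} be a family where each e_C is an ℝ≥0-distribution on the sections over C (not assumed compatible). Then there exists a real-valued global section for this family — a function d : O^X → ℝ with Σ_{t : X→O} d(t) = 1 and, for every C ∈ M and section s over C, Σ_{t : X→O, t|C = s} d(t) = e_C(s) — if and only if the family is compatible (no-signalling), i.e. e_C|C∩C' = e_{C'}|C∩C' for all C, C' ∈ M. -/
open Finset

/-- Restriction of a section over `U` to a subset `V ⊆ U`. -/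
def resSec {X O : Type} {U V : Finset X} (h : V ⊆ U) (s : {x // x ∈ U} → O) :
    {x // x ∈ V} → O :=
  fun v => s ⟨v.1, h v.2⟩

/-- Restriction of a global assignment `t : X → O` to the context `C`. -/
def resGlob {X O : Type} (t : X → O) (C : Finset X) : {x // x ∈ C} → O :=
  fun c => t c.1

/-- Marginal of an `R`-valued distribution on sections over `U` to `V ⊆ U`:
`(d|V)(s) = ∑_{s' restricting to s} d(s')`. -/
def marg {X O R : Type} [DecidableEq X] [Fintype O] [DecidableEq O]
    [AddCommMonoid R] {U V : Finset X} (h : V ⊆ U)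
    (d : ({x // x ∈ U} → O) → R) : ({x // x ∈ V} → O) → R :=
  fun s => ∑ s' ∈ univ.filter (fun s' => resSec h s' = s), d s'

/-- Marginal of a distribution on global assignments to the context `C`. -/
def globMarg {X O R : Type} [Fintype X] [DecidableEq X] [Fintype O] [DecidableEq O]
    [AddCommMonoid R] (d : (X → O) → R) (C : Finset X) : ({x // x ∈ C} → O) → R :=
  fun s => ∑ t ∈ univ.filter (fun t => resGlob t C = s), d t

theorem marg_globMarg {X O : Type} [Fintype X] [DecidableEq X] [Fintype O] [DecidableEq O]
    (d : (X → O) → ℝ) {C V : Finset X} (h : V ⊆ C) :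
    marg h (globMarg d C) = globMarg d V := by
  funext s
  unfold marg globMarg
  simp only [Finset.sum_filter]
  have : ∀ s' : {x // x ∈ C} → O,
      (if resSec h s' = s then ∑ t, (if resGlob t C = s' then d t else 0) else 0) =
      ∑ t, (if resGlob t C = s' then (if resSec h s' = s then d t else 0) else 0) := by
    intro s'
    split_ifs <;> simp
  simp only [this]
  rw [Finset.sum_comm]
  refine Finset.sum_congr rfl fun t _ => ?_
  rw [Finset.sum_ite_eq]
  simp only [Finset.mem_univ, if_true]
  rfl

theorem sum_globMarg {X O : Type} [Fintype X] [DecidableEq X] [Fintype O] [DecidableEq O]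
    (d : (X → O) → ℝ) (C : Finset X) : ∑ s, globMarg d C s = ∑ t, d t := by
  unfold globMarg
  exact Finset.sum_fiberwise _ _ _

theorem marg_coe {X O : Type} [DecidableEq X] [Fintype O] [DecidableEq O]
    {U V : Finset X} (h : V ⊆ U) (d : ({x // x ∈ U} → O) → NNReal) (s : {x // x ∈ V} → O) :
    ((marg h d s : NNReal) : ℝ) = marg h (fun s => (d s : ℝ)) s := by
  unfold marg
  push_cast
  rfl

/-- Extend a section by a fixed global assignment. -/
def extSec {X O : Type} [DecidableEq X] (t0 : X → O) (C : Finset X) (s : {x // x ∈ C} → O) :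
    X → O := fun x => if h : x ∈ C then s ⟨x, h⟩ else t0 x

/-- Push forward along the extension. -/
def extD {X O : Type} [DecidableEq X] [Fintype O] [DecidableEq O] [Fintype X] (t0 : X → O)
    (C : Finset X) (r : ({x // x ∈ C} → O) → ℝ) : (X → O) → ℝ :=
  fun t => ∑ s, if extSec t0 C s = t then r s else 0

theorem globMarg_extD {X O : Type} [Fintype X] [DecidableEq X] [Fintype O] [DecidableEq O]
    (t0 : X → O) (C : Finset X) (r : ({x // x ∈ C} → O) → ℝ) (C' : Finset X)
    (s' : {x // x ∈ C'} → O) :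
    globMarg (extD t0 C r) C' s' =
      ∑ s, if resGlob (extSec t0 C s) C' = s' then r s else 0 := by
  unfold globMarg extD
  rw [Finset.sum_comm]
  refine Finset.sum_congr rfl fun s _ => ?_
  rw [Finset.sum_ite_eq]
  simp

theorem sum_extD {X O : Type} [Fintype X] [DecidableEq X] [Fintype O] [DecidableEq O]
    (t0 : X → O) (C : Finset X) (r : ({x // x ∈ C} → O) → ℝ) :
    ∑ t, extD t0 C r t = ∑ s, r s := by
  unfold extD
  rw [Finset.sum_comm]
  simp

theorem globMarg_extD_self {X O : Type} [Fintype X] [DecidableEq X] [Fintype O] [DecidableEq O]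
    (t0 : X → O) (C : Finset X) (r : ({x // x ∈ C} → O) → ℝ)
    (s' : {x // x ∈ C} → O) :
    globMarg (extD t0 C r) C s' = r s' := by
  rw [globMarg_extD]
  have : ∀ s, resGlob (extSec t0 C s) C = s := by
    intro s; funext x; simp [resGlob, extSec]
  simp [this]

theorem globMarg_extD_zero {X O : Type} [Fintype X] [DecidableEq X] [Fintype O] [DecidableEq O]
    (t0 : X → O) (C C' : Finset X) (r : ({x // x ∈ C} → O) → ℝ)
    (hr : marg (show C ∩ C' ⊆ C from inter_subset_left) r = 0)
    (s' : {x // x ∈ C'} → O) :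
    globMarg (extD t0 C r) C' s' = 0 := by
  rw [globMarg_extD]
  by_cases hs : ∀ x : {x // x ∈ C'}, x.1 ∉ C → s' x = t0 x.1
  · have h0 := congrFun hr (resSec (show C ∩ C' ⊆ C' from inter_subset_right) s')
    unfold marg at h0
    rw [Finset.sum_filter] at h0
    refine Eq.trans (Finset.sum_congr rfl fun s _ => ?_) h0
    refine if_congr ?_ rfl rfl
    constructor
    · intro h
      funext x
      have hx := Finset.mem_inter.1 x.2
      have := congrFun h ⟨x.1, hx.2⟩
      simpa [resGlob, extSec, resSec, hx.1] using this
    · intro h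
      funext x
      by_cases hx : x.1 ∈ C
      · have := congrFun h ⟨x.1, Finset.mem_inter.2 ⟨hx, x.2⟩⟩
        simpa [resGlob, extSec, resSec, hx] using this
      · simp [resGlob, extSec, hx, hs x hx]
  · push Not at hs
    obtain ⟨x, hx, hne⟩ := hs
    refine Finset.sum_eq_zero fun s _ => if_neg fun h => hne ?_
    rw [← h]
    simp [resGlob, extSec, hx]

theorem globMarg_add {X O : Type} [Fintype X] [DecidableEq X] [Fintype O] [DecidableEq O]
    (d d' : (X → O) → ℝ) (C : Finset X) (s : {x // x ∈ C} → O) :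
    globMarg (fun t => d t + d' t) C s = globMarg d C s + globMarg d' C s := by
  unfold globMarg
  exact Finset.sum_add_distrib

/-- A (not necessarily compatible) family of probability distributions on the
sections over the contexts of a measurement cover has a real-valued global section if and only
if it is compatible (no-signalling). -/
theorem real_global_section_iff_no_signalling
    {X O : Type} [Fintype X] [DecidableEq X] [Fintype O] [DecidableEq O]
    (MM : Finset (Finset X))
    (hcov : ∀ x : X, ∃ C ∈ MM, x ∈ C)
    (hanti : ∀ C ∈ MM, ∀ C' ∈ MM, C ⊆ C' → C = C')
    (e : (C : Finset X) → ({x // x ∈ C} → O) → NNReal)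
    (hdist : ∀ C ∈ MM, ∑ s, e C s = 1) :
    (∃ d : (X → O) → ℝ, (∑ t, d t = 1) ∧
      ∀ C ∈ MM, ∀ s : {x // x ∈ C} → O, globMarg d C s = (e C s : ℝ)) ↔
    (∀ C ∈ MM, ∀ C' ∈ MM,
      marg (show C ∩ C' ⊆ C from inter_subset_left) (e C) =
      marg (show C ∩ C' ⊆ C' from inter_subset_right) (e C')) := by
  constructor
  · rintro ⟨d, -, hd⟩ C hC C' hC'
    funext s
    apply NNReal.coe_injective
    rw [marg_coe, marg_coe]
    have h1 : (fun s => (e C s : ℝ)) = globMarg d C := funext fun s => (hd C hC s).symm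
    have h2 : (fun s => (e C' s : ℝ)) = globMarg d C' := funext fun s => (hd C' hC' s).symm
    rw [h1, h2, marg_globMarg, marg_globMarg]
  · intro hns
    have hO : ∀ x : X, Nonempty O := by
      intro x
      obtain ⟨C, hC, hx⟩ := hcov x
      by_contra hne
      haveI : IsEmpty ({x // x ∈ C} → O) := ⟨fun s => hne ⟨s ⟨x, hx⟩⟩⟩
      have := hdist C hC
      simp at this
    let t0 : X → O := fun x => (hO x).some
    suffices H : ∀ S : Finset (Finset X), S ⊆ MM → ∃ d : (X → O) → ℝ, (∑ t, d t = 1) ∧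
        ∀ C ∈ S, ∀ s : {x // x ∈ C} → O, globMarg d C s = (e C s : ℝ) from
      H MM (Finset.Subset.refl _)
    intro S
    induction S using Finset.induction_on with
    | empty =>
      intro _
      exact ⟨fun t => if t = t0 then 1 else 0, by simp, by simp⟩
    | insert C S hCS ih =>
      intro hS
      obtain ⟨d, hd1, hd⟩ := ih fun C' h => hS (Finset.mem_insert_of_mem h)
      have hC : C ∈ MM := hS (Finset.mem_insert_self _ _)
      refine ⟨fun t => d t + extD t0 C (fun s => (e C s : ℝ) - globMarg d C s) t, ?_, ?_⟩
      · rw [Finset.sum_add_distrib, sum_extD, Finset.sum_sub_distrib, sum_globMarg, hd1]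
        have : ∑ s, (e C s : ℝ) = 1 := by
          have := hdist C hC
          exact_mod_cast this
        rw [this]
        norm_num
      · intro C' hC' s
        rw [globMarg_add]
        rcases Finset.mem_insert.1 hC' with rfl | h'
        · rw [globMarg_extD_self]
          ring
        · rw [globMarg_extD_zero, hd C' h', add_zero]
          funext v
          have h1 : (fun s => (e C' s : ℝ)) = globMarg d C' := funext fun s => (hd C' h' s).symm
          have h2 := congrArg NNReal.toReal (congrFun (hns C hC C' (hS hC')) v)
          rw [marg_coe, marg_coe, h1, marg_globMarg,
            ← marg_globMarg d (show C ∩ C' ⊆ C from inter_subset_left)] at h2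
          have h3 : ∀ f g : ({x // x ∈ C} → O) → ℝ,
              marg (show C ∩ C' ⊆ C from inter_subset_left) (fun s => f s - g s) v =
              marg (show C ∩ C' ⊆ C from inter_subset_left) f v -
              marg (show C ∩ C' ⊆ C from inter_subset_left) g v := by
            intro f g
            unfold marg
            exact Finset.sum_sub_distrib _ _
          rw [h3, h2]
          simp
end

section
/- Let O = {1,...,l}, M a measurement cover on a finite set X, 𝒰 the set of partial contexts, and D := Σ_{U∈𝒰} (l−1)^{|U|}. In ℝ^t (vectors indexed by pairs (C,s), C ∈ M, s a section over C), the linear subspace spanned by the vectors (𝟙[t|C = s])_{(C,s)} arising from global assignments t : X → O (the non-contextual models) coincides with the linear subspace spanned by the vectors of compatible probabilistic models over M (the no-signalling models), and both subspaces have dimension D. -/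
open Finset

lemma zeta_inj {Y : Type} [Fintype Y] [DecidableEq Y] {n : ℕ} (f : (Y → Fin (n+1)) → ℝ)
    (h : ∀ t : Y → Fin (n+1), ∑ s ∈ univ.filter (fun s : Y → Fin (n+1) => ∀ x, t x ≠ 0 → s x = t x), f s = 0) :
    ∀ t, f t = 0 := by
  have key : ∀ k : ℕ, ∀ t : Y → Fin (n+1), (univ.filter (fun x => t x = 0)).card = k → f t = 0 := by
    intro k
    induction k using Nat.strong_induction_on with
    | _ k ih =>
      intro t ht
      have h1 := h t
      rw [Finset.sum_eq_single t] at h1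
      · exact h1
      · intro s hs hst
        simp only [mem_filter, mem_univ, true_and] at hs
        refine ih _ ?_ s rfl
        rw [← ht]
        apply Finset.card_lt_card
        rw [Finset.ssubset_iff_of_subset]
        · by_contra hcon
          push Not at hcon
          apply hst
          funext x
          by_cases hx : t x = 0
          · have := hcon x (by simpa using hx)
            rw [hx]
            simpa using this
          · exact hs x hx
        · intro x hx
          simp only [mem_filter, mem_univ, true_and] at hx ⊢
          by_contra h0
          exact h0 (by rw [← hs x h0, hx])
      · intro hn
        exact absurd (by simp) hn
  exact fun t => key _ t rfl

abbrev EE (X : Type) (l : ℕ) (MM : Finset (Finset X)) : Type :=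
  ((C : {C : Finset X // C ∈ MM}) × ({x // x ∈ C.1} → Fin l)) → ℝ

noncomputable def AA {X : Type} [DecidableEq X] {l : ℕ} {MM : Finset (Finset X)}
    (C : {C : Finset X // C ∈ MM}) (U : Finset X) (t : X → Fin l) : EE X l MM →ₗ[ℝ] ℝ :=
  ∑ s ∈ univ.filter (fun s : {x // x ∈ C.1} → Fin l => ∀ x, x.1 ∈ U → s x = t x.1),
    LinearMap.proj (⟨C, s⟩ : (C : {C : Finset X // C ∈ MM}) × ({x // x ∈ C.1} → Fin l))

lemma AA_apply {X : Type} [DecidableEq X] {l : ℕ} {MM : Finset (Finset X)}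
    (C : {C : Finset X // C ∈ MM}) (U : Finset X) (t : X → Fin l) (v : EE X l MM) :
    AA C U t v =
      ∑ s ∈ univ.filter (fun s : {x // x ∈ C.1} → Fin l => ∀ x, x.1 ∈ U → s x = t x.1), v ⟨C, s⟩ := by
  simp [AA, LinearMap.sum_apply]

lemma sum_marg {X : Type} [DecidableEq X] {l : ℕ} {C V U : Finset X} (hV : V ⊆ C) (hU : U ⊆ V)
    (t : X → Fin l) (e : ({x // x ∈ C} → Fin l) → NNReal) :
    ∑ s ∈ univ.filter (fun s : {x // x ∈ C} → Fin l => ∀ x, x.1 ∈ U → s x = t x.1), e s =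
    ∑ r ∈ univ.filter (fun r : {x // x ∈ V} → Fin l => ∀ x, x.1 ∈ U → r x = t x.1), marg hV e r := by
  unfold marg
  rw [← Finset.sum_fiberwise_of_maps_to (g := resSec hV)
    (t := univ.filter (fun r : {x // x ∈ V} → Fin l => ∀ x, x.1 ∈ U → r x = t x.1))]
  · refine Finset.sum_congr rfl fun r hr => ?_
    refine Finset.sum_congr ?_ fun _ _ => rfl
    ext s
    simp only [mem_filter, mem_univ, true_and] at hr ⊢
    refine ⟨fun h => h.2, fun h => ⟨fun x hx => ?_, h⟩⟩
    have := hr ⟨x.1, hU hx⟩ hx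
    rw [← h] at this
    exact this
  · intro s hs
    simp only [mem_filter, mem_univ, true_and] at hs ⊢
    intro x hx
    exact hs ⟨x.1, hV x.2⟩ hx

noncomputable def WW (X : Type) [DecidableEq X] (l : ℕ) (MM : Finset (Finset X)) :
    Submodule ℝ (EE X l MM) where
  carrier := {v | ∀ (C C' : {C : Finset X // C ∈ MM}) (U : Finset X) (t : X → Fin l),
    U ⊆ C.1 → U ⊆ C'.1 → AA C U t v = AA C' U t v}
  add_mem' := by
    intro a b ha hb C C' U t h h'
    rw [map_add, map_add, ha C C' U t h h', hb C C' U t h h']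
  zero_mem' := by
    intro C C' U t h h'
    rw [map_zero, map_zero]
  smul_mem' := by
    intro c a ha C C' U t h h'
    rw [map_smul, map_smul, ha C C' U t h h']

def supp {X : Type} [Fintype X] {n : ℕ} (t : X → Fin (n+1)) : Finset X :=
  univ.filter (fun x => t x ≠ 0)

lemma mem_supp {X : Type} [Fintype X] {n : ℕ} (t : X → Fin (n+1)) (x : X) :
    x ∈ supp t ↔ t x ≠ 0 := by simp [supp]

abbrev II (X : Type) [Fintype X] (n : ℕ) (MM : Finset (Finset X)) : Type :=
  {t : X → Fin (n+1) // ∃ C ∈ MM, supp t ⊆ C}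

lemma card_II {X : Type} [Fintype X] [DecidableEq X] (n : ℕ) (MM : Finset (Finset X)) :
    Fintype.card (II X n MM) =
      ∑ U ∈ univ.filter (fun U : Finset X => ∃ C ∈ MM, U ⊆ C), n ^ U.card := by
  rw [Fintype.card_subtype]
  rw [Finset.card_eq_sum_card_fiberwise (f := supp)
    (t := univ.filter (fun U : Finset X => ∃ C ∈ MM, U ⊆ C))]
  · refine Finset.sum_congr rfl fun U hU => ?_
    simp only [mem_filter, mem_univ, true_and] at hU
    have : (univ.filter (fun t : X → Fin (n+1) => ∃ C ∈ MM, supp t ⊆ C)).filter (fun t => supp t = U)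
        = Fintype.piFinset (fun x => if x ∈ U then univ.erase (0 : Fin (n+1)) else {0}) := by
      ext t
      simp only [mem_filter, mem_univ, true_and, Fintype.mem_piFinset]
      constructor
      · rintro ⟨-, rfl⟩ x
        by_cases hx : t x = 0 <;> simp [mem_supp, hx]
      · intro h
        have hs : supp t = U := by
          ext x
          have := h x
          rw [mem_supp]
          by_cases hx : x ∈ U <;> simp_all
        exact ⟨hs ▸ hU, hs⟩
    rw [this, Fintype.card_piFinset]
    have h2 : ∀ x, (if x ∈ U then univ.erase (0 : Fin (n+1)) else {0}).card = if x ∈ U then n else 1 := by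
      intro x
      split_ifs <;> simp
    simp only [h2]
    simp
  · intro t ht
    simpa using ht

lemma finrank_WW {X : Type} [Fintype X] [DecidableEq X] (n : ℕ) (MM : Finset (Finset X)) :
    Module.finrank ℝ (WW X (n+1) MM) ≤ Fintype.card (II X n MM) := by
  let Φ : EE X (n+1) MM →ₗ[ℝ] (II X n MM → ℝ) :=
    LinearMap.pi fun t => AA ⟨t.2.choose, t.2.choose_spec.1⟩ (supp t.1) t.1
  have hinj : Function.Injective (Φ.comp (WW X (n+1) MM).subtype) := by
    rw [← LinearMap.ker_eq_bot, LinearMap.ker_eq_bot']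
    rintro ⟨v, hv⟩ h
    ext ⟨C, s⟩
    change v ⟨C, s⟩ = 0
    refine zeta_inj (fun s => v ⟨C, s⟩) ?_ s
    intro t
    let T : X → Fin (n+1) := fun x => if hx : x ∈ C.1 then t ⟨x, hx⟩ else 0
    have hT : ∀ x : {x // x ∈ C.1}, T x.1 = t x := fun x => by simp [T]
    have hTC : supp T ⊆ C.1 := by
      intro x hx
      rw [mem_supp] at hx
      by_contra h0
      exact hx (by simp [T, h0])
    have hI : ∃ C ∈ MM, supp T ⊆ C := ⟨C.1, C.2, hTC⟩
    have h1 := congrFun h ⟨T, hI⟩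
    change AA ⟨hI.choose, hI.choose_spec.1⟩ (supp T) T v = 0 at h1
    rw [hv _ C _ _ hI.choose_spec.2 hTC, AA_apply] at h1
    rw [← h1]
    refine Finset.sum_congr ?_ fun _ _ => rfl
    ext s
    simp only [mem_filter, mem_univ, true_and, mem_supp, hT]
  have := LinearMap.finrank_le_finrank_of_injective hinj
  simpa using this

def gg {X : Type} [DecidableEq X] {l : ℕ} (MM : Finset (Finset X)) (t : X → Fin l) : EE X l MM :=
  fun p => if resGlob t p.1.1 = p.2 then (1 : ℝ) else 0

lemma AA_gg {X : Type} [DecidableEq X] {l : ℕ} {MM : Finset (Finset X)}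
    (C : {C : Finset X // C ∈ MM}) (U : Finset X) (hU : U ⊆ C.1) (t t' : X → Fin l) :
    AA C U t (gg MM t') = if ∀ x ∈ U, t' x = t x then 1 else 0 := by
  rw [AA_apply]
  simp only [gg]
  rw [Finset.sum_ite_eq]
  refine if_congr ?_ rfl rfl
  simp only [mem_filter, mem_univ, true_and, resGlob]
  exact ⟨fun h x hx => h ⟨x, hU hx⟩ hx, fun h x hx => h x.1 hx⟩

lemma gg_indep {X : Type} [Fintype X] [DecidableEq X] (n : ℕ) (MM : Finset (Finset X)) :
    LinearIndependent ℝ (fun t : II X n MM => gg MM t.1) := by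
  classical
  rw [Fintype.linearIndependent_iff]
  intro c hc
  let f : (X → Fin (n+1)) → ℝ := fun t => if h : ∃ C ∈ MM, supp t ⊆ C then c ⟨t, h⟩ else 0
  have hf : ∀ t, f t = 0 := by
    apply zeta_inj
    intro t
    by_cases ht : ∃ C ∈ MM, supp t ⊆ C
    · obtain ⟨C, hC, hs⟩ := ht
      have h1 := congrArg (AA ⟨C, hC⟩ (supp t) t) hc
      rw [map_sum, map_zero] at h1
      simp only [map_smul, AA_gg ⟨C, hC⟩ (supp t) hs, mem_supp] at h1
      rw [← h1, Finset.sum_filter]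
      have h2 := Finset.sum_subtype (univ.filter (fun t : X → Fin (n+1) => ∃ C ∈ MM, supp t ⊆ C))
        (p := fun t => ∃ C ∈ MM, supp t ⊆ C) (F := inferInstanceAs (Fintype (II X n MM))) (by simp)
        (fun s => if (∀ x, t x ≠ 0 → s x = t x) then f s else 0)
      have h3 : ∀ s : X → Fin (n+1), s ∉ univ.filter (fun t : X → Fin (n+1) => ∃ C ∈ MM, supp t ⊆ C) →
          (if (∀ x, t x ≠ 0 → s x = t x) then f s else 0) = 0 := by
        intro s hs
        simp only [mem_filter, mem_univ, true_and] at hs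
        simp only [f, dif_neg hs, ite_self]
      rw [← Finset.sum_subset (Finset.subset_univ _) (fun s _ hs => h3 s hs), h2]
      refine Finset.sum_congr rfl fun s _ => ?_
      simp only [f, dif_pos s.2, smul_eq_mul, mul_ite, mul_one, mul_zero]
    · refine Finset.sum_eq_zero fun s hs => ?_
      simp only [mem_filter, mem_univ, true_and] at hs
      refine dif_neg ?_
      rintro ⟨C, hC, h⟩
      refine ht ⟨C, hC, fun x hx => h ?_⟩
      rw [mem_supp] at hx ⊢
      rwa [hs x hx]
  intro t
  have := hf t.1
  simpa [f, t.2] using this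

/-- In `ℝ^t` (vectors indexed by pairs `(C, s)` of a context and a section over
it), the subspace spanned by the vectors `(𝟙[t|C = s])` of global assignments `t : X → O` (the
non-contextual models) coincides with the subspace spanned by the vectors of compatible
probabilistic models (the no-signalling models), and both have dimension
`D = ∑_{U ∈ 𝒰} (l-1)^{|U|}`. -/
theorem noncontextual_and_nosignalling_spans_coincide
    {X : Type} [Fintype X] [DecidableEq X] {l : ℕ} (hl : 1 ≤ l)
    (MM : Finset (Finset X))
    (hcov : ∀ x : X, ∃ C ∈ MM, x ∈ C)
    (hanti : ∀ C ∈ MM, ∀ C' ∈ MM, C ⊆ C' → C = C') :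
    (Submodule.span ℝ
      { v : ((C : {C : Finset X // C ∈ MM}) × ({x // x ∈ C.1} → Fin l)) → ℝ |
        ∃ t : X → Fin l, v = fun p => if resGlob t p.1.1 = p.2 then (1 : ℝ) else 0 }
      = Submodule.span ℝ
      { v : ((C : {C : Finset X // C ∈ MM}) × ({x // x ∈ C.1} → Fin l)) → ℝ |
        ∃ e : (C : Finset X) → ({x // x ∈ C} → Fin l) → NNReal,
          (∀ C ∈ MM, ∑ s, e C s = 1) ∧
          (∀ C ∈ MM, ∀ C' ∈ MM,
            marg (show C ∩ C' ⊆ C from inter_subset_left) (e C) =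
            marg (show C ∩ C' ⊆ C' from inter_subset_right) (e C')) ∧
          v = fun p => (e p.1.1 p.2 : ℝ) }) ∧
    Module.finrank ℝ ↥(Submodule.span ℝ
      { v : ((C : {C : Finset X // C ∈ MM}) × ({x // x ∈ C.1} → Fin l)) → ℝ |
        ∃ t : X → Fin l, v = fun p => if resGlob t p.1.1 = p.2 then (1 : ℝ) else 0 })
      = ∑ U ∈ univ.filter (fun U : Finset X => ∃ C ∈ MM, U ⊆ C), (l - 1) ^ U.card := by
  obtain ⟨n, rfl⟩ : ∃ n, l = n + 1 := ⟨l - 1, by omega⟩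
  set N := Submodule.span ℝ
      { v : ((C : {C : Finset X // C ∈ MM}) × ({x // x ∈ C.1} → Fin (n+1))) → ℝ |
        ∃ t : X → Fin (n+1), v = fun p => if resGlob t p.1.1 = p.2 then (1 : ℝ) else 0 } with hN
  set P := Submodule.span ℝ
      { v : ((C : {C : Finset X // C ∈ MM}) × ({x // x ∈ C.1} → Fin (n+1))) → ℝ |
        ∃ e : (C : Finset X) → ({x // x ∈ C} → Fin (n+1)) → NNReal,
          (∀ C ∈ MM, ∑ s, e C s = 1) ∧
          (∀ C ∈ MM, ∀ C' ∈ MM,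
            marg (show C ∩ C' ⊆ C from inter_subset_left) (e C) =
            marg (show C ∩ C' ⊆ C' from inter_subset_right) (e C')) ∧
          v = fun p => (e p.1.1 p.2 : ℝ) } with hP
  have hNP : N ≤ P := by
    apply Submodule.span_mono
    rintro v ⟨t, rfl⟩
    refine ⟨fun C s => if resGlob t C = s then 1 else 0, fun C _ => by simp, ?_, ?_⟩
    · intro C _ C' _
      funext s
      simp only [marg, Finset.sum_ite_eq, mem_filter, mem_univ, true_and]
      rfl
    · funext p
      by_cases h : resGlob t p.1.1 = p.2 <;> simp [h]
  have hPW : P ≤ WW X (n+1) MM := by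
    apply Submodule.span_le.2
    rintro v ⟨e, -, he, rfl⟩
    intro C C' U t hU hU'
    rw [AA_apply, AA_apply]
    have h1 := sum_marg (show C.1 ∩ C'.1 ⊆ C.1 from inter_subset_left)
      (Finset.subset_inter hU hU') t (e C.1)
    have h2 := sum_marg (show C.1 ∩ C'.1 ⊆ C'.1 from inter_subset_right)
      (Finset.subset_inter hU hU') t (e C'.1)
    rw [he C.1 C.2 C'.1 C'.2, ← h2] at h1
    exact_mod_cast h1
  have hIN : Fintype.card (II X n MM) ≤ Module.finrank ℝ N := by
    rw [← finrank_span_eq_card (gg_indep n MM)]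
    apply Submodule.finrank_mono
    apply Submodule.span_mono
    rintro _ ⟨t, rfl⟩
    exact ⟨t.1, rfl⟩
  have hW := finrank_WW n MM
  have hPI : Module.finrank ℝ P ≤ Fintype.card (II X n MM) :=
    (Submodule.finrank_mono hPW).trans hW
  have hNP' : Module.finrank ℝ N ≤ Module.finrank ℝ P := Submodule.finrank_mono hNP
  refine ⟨Submodule.eq_of_le_of_finrank_le hNP (hPI.trans hIN), ?_⟩
  rw [Nat.add_sub_cancel, ← card_II]
  exact le_antisymm (hNP'.trans hPI) hIN
end

section
/- Let R be a commutative semiring, M a measurement cover on a finite set X with finite outcome set O, and e = (e_C)_{C∈M} a compatible empirical model over M with values in R. Then the following are equivalent: (i) e has a realization by a factorizable hidden-variable model, i.e. there exist a finite set Λ, an R-distribution h_Λ on Λ, and for each λ ∈ Λ a compatible family (h^λ_C)_{C∈M} of R-distributions on sections over the contexts, such that h^λ_C(s) = Π_{m∈C} (h^λ_C|{m})(s|{m}) for every λ, C ∈ M, and section s over C, and e_C(s) = Σ_{λ∈Λ} h^λ_C(s)·h_Λ(λ) for every C ∈ M and section s over C; (ii) e has a global section, i.e. an R-distribution d on O^X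 with d|C = e_C for every C ∈ M. -/
open Finset

theorem aux_marg_marg {X O R : Type} [DecidableEq X] [Fintype O] [DecidableEq O]
    [AddCommMonoid R] {U V W : Finset X} (h : V ⊆ U) (h' : W ⊆ V)
    (d : ({x // x ∈ U} → O) → R) : marg h' (marg h d) = marg (h'.trans h) d := by
  funext s
  unfold marg
  rw [← Finset.sum_fiberwise_of_maps_to (s := univ.filter (fun s' => resSec (h'.trans h) s' = s))
    (t := univ.filter (fun s' => resSec h' s' = s)) (g := resSec h)]
  · refine Finset.sum_congr rfl fun r hr => Finset.sum_congr ?_ fun _ _ => rfl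
    ext u
    simp only [mem_filter, mem_univ, true_and] at hr ⊢
    constructor
    · intro hu
      refine ⟨?_, hu⟩
      rw [← hr, ← hu]
      rfl
    · exact fun hu => hu.2
  · intro u hu
    simp only [mem_filter, mem_univ, true_and] at hu ⊢
    rw [← hu]
    rfl

theorem aux_marg_sum {X O R : Type} [DecidableEq X] [Fintype O] [DecidableEq O]
    [AddCommMonoid R] {U V : Finset X} (h : V ⊆ U)
    (d : ({x // x ∈ U} → O) → R) : ∑ s, marg h d s = ∑ s, d s := by
  unfold marg
  exact Finset.sum_fiberwise _ _ _

theorem aux_marg_delta {X O R : Type} [DecidableEq X] [Fintype O] [DecidableEq O]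
    [CommSemiring R] {U V : Finset X} (h : V ⊆ U) (t : X → O) :
    marg h (fun s => if resGlob t U = s then (1 : R) else 0) =
      fun s => if resGlob t V = s then (1 : R) else 0 := by
  funext s
  unfold marg
  rw [Finset.sum_ite_eq]
  simp only [mem_filter, mem_univ, true_and]
  rfl

theorem aux_prod {X O R : Type} [Fintype X] [DecidableEq X] [Fintype O] [DecidableEq O]
    [CommSemiring R] (p : X → O → R) (hp : ∀ x, ∑ o, p x o = 1) (C : Finset X)
    (s : {x // x ∈ C} → O) :
    globMarg (fun t => ∏ x, p x (t x)) C s = ∏ m : {x // x ∈ C}, p m.1 (s m) := by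
  unfold globMarg
  have : univ.filter (fun t => resGlob t C = s) =
      Fintype.piFinset (fun x => if hx : x ∈ C then {s ⟨x, hx⟩} else univ) := by
    ext t
    simp only [mem_filter, mem_univ, true_and, Fintype.mem_piFinset]
    constructor
    · rintro rfl x
      split_ifs <;> simp [resGlob]
    · intro h
      funext ⟨x, hx⟩
      have := h x
      simpa [hx, resGlob] using this
  rw [this, ← Finset.prod_univ_sum]
  rw [← Finset.prod_subset (Finset.subset_univ C), ← Finset.prod_attach]
  · refine Finset.prod_congr rfl fun m _ => ?_
    simp [m.2]
  · intro x _ hx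
    simp [hx, hp]

/-- Over any commutative semiring `R`, a compatible empirical model `e` on a
measurement cover has a realization by a factorizable hidden-variable model (a finite set
`Λ = Fin k` of hidden variables, a distribution `hΛ` on `Λ`, and for each `λ` a compatible
family of distributions `h λ C` which factor as products of their one-measurement marginals,
averaging to `e`) if and only if `e` has a global section (a distribution on global
assignments marginalizing to each `e C`). -/
theorem factorizable_hidden_variable_iff_global_section
    {X O R : Type} [Fintype X] [DecidableEq X] [Fintype O] [DecidableEq O] [CommSemiring R]
    (MM : Finset (Finset X))
    (hcov : ∀ x : X, ∃ C ∈ MM, x ∈ C)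
    (hanti : ∀ C ∈ MM, ∀ C' ∈ MM, C ⊆ C' → C = C')
    (e : (C : Finset X) → ({x // x ∈ C} → O) → R)
    (hdist : ∀ C ∈ MM, ∑ s, e C s = 1)
    (hcompat : ∀ C ∈ MM, ∀ C' ∈ MM,
      marg (show C ∩ C' ⊆ C from inter_subset_left) (e C) =
      marg (show C ∩ C' ⊆ C' from inter_subset_right) (e C')) :
    (∃ (k : ℕ) (hΛ : Fin k → R) (h : Fin k → (C : Finset X) → ({x // x ∈ C} → O) → R),
      (∑ lam, hΛ lam = 1) ∧
      (∀ lam, ∀ C ∈ MM, ∑ s, h lam C s = 1) ∧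
      (∀ lam, ∀ C ∈ MM, ∀ C' ∈ MM,
        marg (show C ∩ C' ⊆ C from inter_subset_left) (h lam C) =
        marg (show C ∩ C' ⊆ C' from inter_subset_right) (h lam C')) ∧
      (∀ lam, ∀ C ∈ MM, ∀ s : {x // x ∈ C} → O,
        h lam C s = ∏ m : {x // x ∈ C},
          marg (show ({m.1} : Finset X) ⊆ C from Finset.singleton_subset_iff.mpr m.2)
            (h lam C) (resSec (Finset.singleton_subset_iff.mpr m.2) s)) ∧
      (∀ C ∈ MM, ∀ s : {x // x ∈ C} → O, e C s = ∑ lam, h lam C s * hΛ lam)) ↔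
    (∃ d : (X → O) → R, (∑ t, d t = 1) ∧
      ∀ C ∈ MM, ∀ s : {x // x ∈ C} → O, globMarg d C s = e C s) := by
  constructor
  · rintro ⟨k, hΛ, h, h1, h2, h3, h4, h5⟩
    choose c hc hxc using hcov
    let p : Fin k → X → O → R := fun l x o =>
      marg (Finset.singleton_subset_iff.mpr (hxc x)) (h l (c x)) (fun _ : {y // y ∈ ({x} : Finset X)} => o)
    have hp : ∀ l x, ∑ o, p l x o = 1 := by
      intro l x
      rw [← h2 l (c x) (hc x), ← aux_marg_sum (Finset.singleton_subset_iff.mpr (hxc x))]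
      refine Fintype.sum_equiv (Equiv.funUnique {y // y ∈ ({x} : Finset X)} O).symm _ _ fun o => rfl
    have hq : ∀ l, ∀ C ∈ MM, ∀ s, h l C s = ∏ m : {x // x ∈ C}, p l m.1 (s m) := by
      intro l C hC s
      rw [h4 l C hC s]
      refine Finset.prod_congr rfl fun m _ => ?_
      have hm : ({m.1} : Finset X) ⊆ C ∩ c m.1 := by
        simp [hxc]
      have := congrArg (marg hm) (h3 l C hC (c m.1) (hc m.1))
      rw [aux_marg_marg, aux_marg_marg] at this
      rw [this]
      refine congrArg _ ?_
      funext ⟨y, hy⟩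
      have hy' := Finset.mem_singleton.mp hy
      subst hy'
      rfl
    refine ⟨fun t => ∑ l, (∏ x, p l x (t x)) * hΛ l, ?_, ?_⟩
    · rw [Finset.sum_comm, ← h1]
      refine Finset.sum_congr rfl fun l _ => ?_
      rw [← Finset.sum_mul, ← Fintype.piFinset_univ, ← Finset.prod_univ_sum]
      simp [hp]
    · intro C hC s
      rw [h5 C hC s]
      unfold globMarg
      rw [Finset.sum_comm]
      refine Finset.sum_congr rfl fun l _ => ?_
      rw [← Finset.sum_mul, hq l C hC s, ← aux_prod (p l) (hp l)]
      rfl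
  · rintro ⟨d, hd, hg⟩
    let E := (Fintype.equivFin (X → O)).symm
    refine ⟨Fintype.card (X → O), fun l => d (E l),
      fun l C s => if resGlob (E l) C = s then 1 else 0, ?_, ?_, ?_, ?_, ?_⟩
    · rw [← hd]
      exact Equiv.sum_comp E d
    · intro l C _
      simp
    · intro l C _ C' _
      rw [aux_marg_delta, aux_marg_delta]
    · intro l C _ s
      simp only [aux_marg_delta]
      rw [Finset.prod_ite_zero]
      simp only [Finset.prod_const_one]
      refine if_congr ?_ rfl rfl
      constructor
      · rintro rfl m _
        rfl
      · intro hm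
        funext m
        exact congrFun (hm m (mem_univ m)) ⟨m.1, Finset.mem_singleton_self _⟩
    · intro C hC s
      rw [← hg C hC s]
      unfold globMarg
      rw [Finset.sum_filter, ← Equiv.sum_comp E]
      refine Finset.sum_congr rfl fun l _ => ?_
      simp
end
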